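/- arXiv:1612.07657 — 9 statements merged into one kernel-verified Lean document; each statement's English description precedes it below -/
import Mathlib

section
/- Let R be a commutative ring and w : ℕ → ℕ → R a Pascal-type weight. Then the operation ∘ defined on formal power series R[[x]] by [xⁿ](a ∘ b) = Σ_{m=0}^{n} w(n,m) · a_m · b_{n−m} is commutative, associative, bilinear over R, and has the constant series 1 as a two-sided identity; hence (R[[x]], +, ∘) is a commutative ring. -/
open PowerSeries

/-- A Pascal-type weight on a commutative ring `R`. -/
def IsPascalWeight {R : Type*} [CommRing R] (w : ℕ → ℕ → R) : Prop :=
  (∀ n, w n 0 = 1) ∧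
  (∀ n m, m ≤ n → w n m = w n (n - m)) ∧
  (∀ n m k, m ≤ n → w (n + k) k * w n m = w (n + k) (m + k) * w (m + k) k)

/-- The `w`-product of formal power series:
`[xⁿ](a ∘ b) = ∑_{m=0}^{n} w(n,m)·aₘ·b_{n−m}`. -/
noncomputable def wmul {R : Type*} [CommRing R] (w : ℕ → ℕ → R)
    (a b : PowerSeries R) : PowerSeries R :=
  PowerSeries.mk fun n => ∑ m ∈ Finset.range (n + 1),
    w n m * PowerSeries.coeff m a * PowerSeries.coeff (n - m) b

/-!
In the antidiagonal form `[xⁿ](a ∘ b) = ∑_{i+j=n} w(i+j, i) aᵢ bⱼ`, commutativity and the unit laws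
follow from the symmetry and normalisation of `c(i, j) := w(i+j, i)`, and associativity from the
2-cocycle identity `c(i+j, k) c(i, j) = c(i, j+k) c(j, k)`, whose two sides are the coefficients of
`aᵢ bⱼ dₖ` in `(a ∘ b) ∘ d` and `a ∘ (b ∘ d)`. The cocycle identity is the third axiom of a
Pascal-type weight at `(n, m, k) := (j+k, j, i)`; for `w = Nat.choose` both sides are the trinomial
coefficient.
-/

open Finset.HasAntidiagonal (antidiagonal antidiagonal_congr antidiagonal_congr' mem_antidiagonal)

theorem sum_antidiagonal_assoc {A M : Type*} [AddMonoid A] [Finset.HasAntidiagonal A]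
    [AddCommMonoid M] (f : A → A → A → M) (n : A) :
    ∑ p ∈ antidiagonal n, ∑ q ∈ antidiagonal p.1, f q.1 q.2 p.2 =
      ∑ p ∈ antidiagonal n, ∑ q ∈ antidiagonal p.2, f p.1 q.1 q.2 := by
  simp only [Finset.sum_sigma']
  apply Finset.sum_nbij' (fun ⟨⟨_, k⟩, ⟨i, j⟩⟩ ↦ ⟨(i, j + k), (j, k)⟩)
    (fun ⟨⟨i, _⟩, ⟨j, k⟩⟩ ↦ ⟨(i + j, k), (i, j)⟩)
  all_goals
    rintro ⟨⟨_, _⟩, ⟨_, _⟩⟩ h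
    obtain ⟨rfl, rfl⟩ := by simpa only [Finset.mem_sigma, mem_antidiagonal] using h
    simp [add_assoc]

namespace IsPascalWeight

variable {R : Type*} [CommRing R] {w : ℕ → ℕ → R}

theorem apply_zero_right (hw : IsPascalWeight w) (n : ℕ) : w n 0 = 1 :=
  hw.1 n

theorem apply_add_symm (hw : IsPascalWeight w) (i j : ℕ) : w (i + j) i = w (i + j) j := by
  simpa only [Nat.add_sub_cancel_left] using hw.2.1 (i + j) i (Nat.le_add_right i j)

theorem apply_self (hw : IsPascalWeight w) (n : ℕ) : w n n = 1 := by
  simpa only [add_zero, hw.apply_zero_right] using hw.apply_add_symm n 0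

theorem two_cocycle (hw : IsPascalWeight w) (i j k : ℕ) :
    w (i + j + k) (i + j) * w (i + j) i = w (i + (j + k)) i * w (j + k) j := by
  have shift := hw.2.2 (j + k) j i (Nat.le_add_right j k)
  rw [add_comm (j + k) i, add_comm j i] at shift
  rw [shift, add_assoc]

end IsPascalWeight

section WProduct

variable {R : Type*} [CommRing R] {w : ℕ → ℕ → R}

theorem coeff_wmul (w : ℕ → ℕ → R) (a b : R⟦X⟧) (n : ℕ) :
    coeff n (wmul w a b) =
      ∑ p ∈ antidiagonal n, w (p.1 + p.2) p.1 * coeff p.1 a * coeff p.2 b := by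
  rw [wmul, coeff_mk, ← Finset.Nat.sum_antidiagonal_eq_sum_range_succ
    (fun i j ↦ w n i * coeff i a * coeff j b)]
  refine Finset.sum_congr rfl fun p hp ↦ ?_
  rw [mem_antidiagonal.mp hp]

theorem add_wmul (w : ℕ → ℕ → R) (a b c : R⟦X⟧) :
    wmul w (a + b) c = wmul w a c + wmul w b c := by
  ext n
  simp only [coeff_wmul, map_add, mul_add, add_mul, Finset.sum_add_distrib]

theorem wmul_add (w : ℕ → ℕ → R) (a b c : R⟦X⟧) :
    wmul w a (b + c) = wmul w a b + wmul w a c := by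
  ext n
  simp only [coeff_wmul, map_add, mul_add, Finset.sum_add_distrib]

theorem smul_wmul (w : ℕ → ℕ → R) (r : R) (a b : R⟦X⟧) :
    wmul w (r • a) b = r • wmul w a b := by
  ext n
  simp only [coeff_wmul, map_smul, mul_smul_comm, smul_mul_assoc, Finset.smul_sum]

theorem wmul_smul (w : ℕ → ℕ → R) (r : R) (a b : R⟦X⟧) :
    wmul w a (r • b) = r • wmul w a b := by
  ext n
  simp only [coeff_wmul, map_smul, mul_smul_comm, Finset.smul_sum]

theorem wmul_comm_of_symm (hsymm : ∀ i j, w (i + j) i = w (i + j) j) (a b : R⟦X⟧) :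
    wmul w a b = wmul w b a := by
  ext n
  rw [coeff_wmul, coeff_wmul, ← Finset.Nat.sum_antidiagonal_swap]
  refine Finset.sum_congr rfl fun p _ ↦ ?_
  rw [Prod.fst_swap, Prod.snd_swap, hsymm, add_comm p.2 p.1, mul_right_comm]

theorem one_wmul_of_apply_zero_right (hzero : ∀ n, w n 0 = 1) (a : R⟦X⟧) : wmul w 1 a = a := by
  ext n
  rw [coeff_wmul, Finset.sum_eq_single_of_mem (0, n) (by simp)]
  · simp [hzero]
  · intro p hp hne
    have hfst : p.1 ≠ 0 := fun h ↦ hne ((antidiagonal_congr hp (by simp)).mpr h)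
    simp [coeff_one, hfst]

theorem wmul_one_of_apply_self (hself : ∀ n, w n n = 1) (a : R⟦X⟧) : wmul w a 1 = a := by
  ext n
  rw [coeff_wmul, Finset.sum_eq_single_of_mem (n, 0) (by simp)]
  · simp [hself]
  · intro p hp hne
    have hsnd : p.2 ≠ 0 := fun h ↦ hne ((antidiagonal_congr' hp (by simp)).mpr h)
    simp [coeff_one, hsnd]

theorem coeff_wmul_wmul_left (w : ℕ → ℕ → R) (a b c : R⟦X⟧) (n : ℕ) :
    coeff n (wmul w (wmul w a b) c) =
      ∑ p ∈ antidiagonal n, ∑ q ∈ antidiagonal p.1,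
        w (q.1 + q.2 + p.2) (q.1 + q.2) * w (q.1 + q.2) q.1 *
          (coeff q.1 a * coeff q.2 b * coeff p.2 c) := by
  simp only [coeff_wmul, Finset.mul_sum, Finset.sum_mul]
  refine Finset.sum_congr rfl fun p _ ↦ Finset.sum_congr rfl fun q hq ↦ ?_
  rw [mem_antidiagonal.mp hq]
  ring

theorem coeff_wmul_wmul_right (w : ℕ → ℕ → R) (a b c : R⟦X⟧) (n : ℕ) :
    coeff n (wmul w a (wmul w b c)) =
      ∑ p ∈ antidiagonal n, ∑ q ∈ antidiagonal p.2,
        w (p.1 + (q.1 + q.2)) p.1 * w (q.1 + q.2) q.1 *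
          (coeff p.1 a * coeff q.1 b * coeff q.2 c) := by
  simp only [coeff_wmul, Finset.mul_sum]
  refine Finset.sum_congr rfl fun p _ ↦ Finset.sum_congr rfl fun q hq ↦ ?_
  rw [mem_antidiagonal.mp hq]
  ring

theorem wmul_assoc_of_two_cocycle
    (hcocycle : ∀ i j k,
      w (i + j + k) (i + j) * w (i + j) i = w (i + (j + k)) i * w (j + k) j)
    (a b c : R⟦X⟧) :
    wmul w (wmul w a b) c = wmul w a (wmul w b c) := by
  ext n
  simp only [coeff_wmul_wmul_left, coeff_wmul_wmul_right, hcocycle]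
  exact sum_antidiagonal_assoc
    (fun i j k ↦ w (i + (j + k)) i * w (j + k) j * (coeff i a * coeff j b * coeff k c)) n

end WProduct

/-- For a Pascal-type weight `w`, the `w`-product on `R[[x]]` is commutative,
associative, bilinear over `R`, and has the constant series `1` as a two-sided
identity; hence `(R[[x]], +, ∘)` is a commutative ring. -/
theorem wmul_commRing_structure {R : Type*} [CommRing R] (w : ℕ → ℕ → R)
    (hw : IsPascalWeight w) :
    (∀ a b : PowerSeries R, wmul w a b = wmul w b a) ∧
    (∀ a b c : PowerSeries R, wmul w (wmul w a b) c = wmul w a (wmul w b c)) ∧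
    (∀ a b c : PowerSeries R, wmul w (a + b) c = wmul w a c + wmul w b c) ∧
    (∀ a b c : PowerSeries R, wmul w a (b + c) = wmul w a b + wmul w a c) ∧
    (∀ (r : R) (a b : PowerSeries R), wmul w (r • a) b = r • wmul w a b) ∧
    (∀ (r : R) (a b : PowerSeries R), wmul w a (r • b) = r • wmul w a b) ∧
    (∀ a : PowerSeries R, wmul w 1 a = a) ∧
    (∀ a : PowerSeries R, wmul w a 1 = a) :=
  ⟨wmul_comm_of_symm hw.apply_add_symm,
    wmul_assoc_of_two_cocycle hw.two_cocycle,
    add_wmul w, wmul_add w, smul_wmul w, wmul_smul w,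
    one_wmul_of_apply_zero_right hw.apply_zero_right,
    wmul_one_of_apply_self hw.apply_self⟩
end

section
/- Let K be a field, φ ∈ K nonzero, and q ≥ 2 an integer. Define c : ℕ → K by c_{qk+i} = φ^{−k} for all k ≥ 0 and 0 ≤ i < q. Then for all 0 ≤ m ≤ n: c_m · c_{n−m} / c_n = 1 if n mod q ≥ m mod q, and c_m · c_{n−m} / c_n = φ if n mod q < m mod q. -/
/-!
Since `c a = φ⁻¹ ^ (a / q)`, the entry `c m * c (n - m) / c n` is `φ` raised to the carry out of the
last digit when `m` and `n - m` are added in base `q`. That carry is `0` or `1`, and it is `1`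
exactly when the last digit of the sum `n` drops below that of the summand `m`.
-/

theorem eq_apply_div_of_forall_mul_add {α : Type*} {q : ℕ} (hq : 0 < q) {c f : ℕ → α}
    (hc : ∀ k i : ℕ, i < q → c (q * k + i) = f k) (a : ℕ) : c a = f (a / q) := by
  simpa only [Nat.div_add_mod] using hc (a / q) (a % q) (Nat.mod_lt a hq)

theorem add_mod_lt_mod_left_iff {q : ℕ} (hq : 0 < q) (m d : ℕ) :
    (m + d) % q < m % q ↔ q ≤ m % q + d % q := by
  have hd : d % q < q := Nat.mod_lt d hq
  have hsum := Nat.add_mod_add_ite m d q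
  split_ifs at hsum <;> omega

theorem div_eq_div_add_sub_div_add_ite {q m n : ℕ} (hq : 0 < q) (hmn : m ≤ n) :
    n / q = m / q + (n - m) / q + if m % q ≤ n % q then 0 else 1 := by
  obtain ⟨d, rfl⟩ := Nat.exists_eq_add_of_le hmn
  simp only [Nat.add_sub_cancel_left, Nat.add_div hq, ← add_mod_lt_mod_left_iff hq, ← not_lt,
    ite_not]

theorem pow_mul_pow_div_pow_add_add {G₀ : Type*} [GroupWithZero G₀] {x : G₀} (hx : x ≠ 0)
    (a b e : ℕ) : x ^ a * x ^ b / x ^ (a + b + e) = x⁻¹ ^ e := by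
  rw [← pow_add, add_comm (a + b) e, pow_add x e, div_mul_cancel_right₀ (pow_ne_zero _ hx), inv_pow]

/-- For `φ ≠ 0` in a field, `q ≥ 2`, and the sequence `c` with `c_{qk+i} = φ^{−k}`
for `0 ≤ i < q`, the entries `cₘ·c_{n−m}/cₙ` of the generalized Pascal matrix
equal `1` when `n mod q ≥ m mod q` and `φ` when `n mod q < m mod q`. -/
theorem pascal_entries_of_phi_q {K : Type*} [Field K] (φ : K) (hφ : φ ≠ 0)
    (q : ℕ) (hq : 2 ≤ q) (c : ℕ → K)
    (hc : ∀ k i : ℕ, i < q → c (q * k + i) = (φ⁻¹) ^ k)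
    (n m : ℕ) (hmn : m ≤ n) :
    c m * c (n - m) / c n = if m % q ≤ n % q then 1 else φ := by
  have hq_pos : 0 < q := by omega
  have c_eq : ∀ a, c a = φ⁻¹ ^ (a / q) := eq_apply_div_of_forall_mul_add hq_pos hc
  calc c m * c (n - m) / c n
      = φ⁻¹ ^ (m / q) * φ⁻¹ ^ ((n - m) / q) /
          φ⁻¹ ^ (m / q + (n - m) / q + if m % q ≤ n % q then 0 else 1) := by
        rw [c_eq m, c_eq (n - m), c_eq n, ← div_eq_div_add_sub_div_add_ite hq_pos hmn]
    _ = φ ^ (if m % q ≤ n % q then 0 else 1) := by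
        rw [pow_mul_pow_div_pow_add_add (inv_ne_zero hφ), inv_inv]
    _ = if m % q ≤ n % q then 1 else φ := by
        rw [pow_ite, pow_zero, pow_one]
end

section
/- Over a commutative ring, for all integers n, m ≥ 0 and all i, j ∈ {0, 1}: the coefficient of x^{2n+i} in the formal power series (1+x)^{1−j} · x^{2m+j} · (1−x²)^{−(m+1)} equals binom(n, m) if i ≥ j, and equals 0 if i < j. -/
open PowerSeries

/-!
Substituting `x ↦ x ^ d` in the geometric series gives the inverse `u` of `1 - x ^ d`, so
`x ^ (d * m) * u ^ (m + 1)` is `∑ k, (k.choose m) x ^ (d * k)`. Multiplying it by `x ^ j` with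
`j < d` moves the support to the exponents congruent to `j` modulo `d`. For `d = 2` and `j = 0` the
factor `1 + x` adds the series with residues `0` and `1`, whose supports are disjoint.
-/

section

variable {R : Type*} [CommRing R]

theorem coeff_mul_add_X_pow_mul_expand {d : ℕ} (hd : d ≠ 0) (f : PowerSeries R) (n : ℕ) {i j : ℕ}
    (hi : i < d) (hj : j < d) :
    coeff (d * n + i) (X ^ j * expand d hd f) = if i = j then coeff n f else 0 := by
  rw [coeff_X_pow_mul']
  split_ifs with hle hij hij
  · rw [hij, Nat.add_sub_cancel, coeff_expand_mul]
  · refine coeff_expand_of_not_dvd d hd f fun hdvd ↦ hij ?_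
    have hmod : j ≡ d * n + i [MOD d] := (Nat.modEq_iff_dvd' hle).mpr hdvd
    have hmod' : d * n + i ≡ i [MOD d] := by simp [Nat.ModEq]
    exact ((hmod.trans hmod').eq_of_lt_of_lt hj hi).symm
  · omega
  · rfl

theorem coeff_X_pow_mul_mk_one_pow_succ (n m : ℕ) :
    coeff n (X ^ m * (mk 1 : PowerSeries R) ^ (m + 1)) = (n.choose m : R) := by
  rw [mk_one_pow_eq_mk_choose_add, coeff_X_pow_mul']
  split_ifs with hmn
  · rw [coeff_mk, Nat.add_sub_cancel' hmn]
  · rw [Nat.choose_eq_zero_of_lt (not_le.mp hmn), Nat.cast_zero]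

theorem one_sub_X_pow_mul_expand_mk_one {d : ℕ} (hd : d ≠ 0) :
    (1 - X ^ d) * expand d hd (mk 1 : PowerSeries R) = 1 := by
  rw [← expand_X d hd, ← map_one (expand d hd), ← map_sub, ← map_mul, mul_comm,
    mk_one_mul_one_sub_eq_one]

variable {d : ℕ} {u : PowerSeries R}

theorem eq_expand_mk_one_of_one_sub_X_pow_mul_eq_one (hd : d ≠ 0) (hu : (1 - X ^ d) * u = 1) :
    u = expand d hd (mk 1) :=
  (left_inv_eq_right_inv ((mul_comm _ _).trans (one_sub_X_pow_mul_expand_mk_one hd)) hu).symm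

theorem coeff_mul_add_X_pow_mul_pow_succ_of_one_sub_X_pow_mul_eq_one
    (hu : (1 - X ^ d) * u = 1) (n m : ℕ) {i j : ℕ} (hi : i < d) (hj : j < d) :
    coeff (d * n + i) (X ^ (d * m + j) * u ^ (m + 1)) = if i = j then (n.choose m : R) else 0 := by
  have hd : d ≠ 0 := Nat.ne_zero_of_lt hi
  have hexpand : X ^ (d * m + j) * u ^ (m + 1) =
      X ^ j * expand d hd (X ^ m * (mk 1 : PowerSeries R) ^ (m + 1)) := by
    rw [eq_expand_mk_one_of_one_sub_X_pow_mul_eq_one hd hu, map_mul, map_pow, map_pow, expand_X]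
    ring
  rw [hexpand, coeff_mul_add_X_pow_mul_expand hd _ n hi hj, coeff_X_pow_mul_mk_one_pow_succ]

end

/-- Over a commutative ring, for `i, j ∈ {0,1}`, the coefficient of `x^{2n+i}` in
`(1+x)^{1−j}·x^{2m+j}·(1−x²)^{−(m+1)}` equals `binom(n,m)` if `i ≥ j` and `0` if
`i < j`.  Here the inverse of `1 − x²` is expressed by a series `u` with
`(1 − x²)·u = 1`. -/
theorem coeff_Pg_neg_one {R : Type*} [CommRing R] (u : PowerSeries R)
    (hu : (1 - X ^ 2) * u = 1) (n m i j : ℕ) (hi : i ≤ 1) (hj : j ≤ 1) :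
    PowerSeries.coeff (R := R) (2 * n + i) ((1 + X) ^ (1 - j) * X ^ (2 * m + j) * u ^ (m + 1)) =
      if j ≤ i then (n.choose m : R) else 0 := by
  have hcoeff {k : ℕ} (hk : k < 2) :
      coeff (2 * n + i) (X ^ (2 * m + k) * u ^ (m + 1)) = if i = k then (n.choose m : R) else 0 :=
    coeff_mul_add_X_pow_mul_pow_succ_of_one_sub_X_pow_mul_eq_one hu n m (Nat.lt_succ_of_le hi) hk
  obtain rfl | rfl := Nat.le_one_iff_eq_zero_or_eq_one.mp hj
  · have hsplit : (1 + X) ^ (1 - 0) * X ^ (2 * m + 0) * u ^ (m + 1) =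
        X ^ (2 * m + 0) * u ^ (m + 1) + X ^ (2 * m + 1) * u ^ (m + 1) := by
      rw [Nat.sub_zero]
      ring
    rw [hsplit, map_add, hcoeff zero_lt_two, hcoeff one_lt_two]
    obtain rfl | rfl := Nat.le_one_iff_eq_zero_or_eq_one.mp hi <;> simp
  · rw [Nat.sub_self, pow_zero, one_mul, hcoeff one_lt_two]
    simp only [hi.ge_iff_eq]
end

section
/- Let K be a commutative ℚ-algebra, q ≥ 2 an integer, and φ, β ∈ K. Define the matrix M_φ by M_φ(qn+i, qm+j) = C(φ, n−m) · C(φ, i−j) for all n, m ≥ 0 and 0 ≤ i, j < q. Then: (a) M_1(N, M) = 1 if M ≤ N and N mod q ≥ M mod q, and M_1(N, M) = 0 otherwise (i.e. M_1 = ₍₀,q₎P); (b) for all M ≤ N, Σ_{K=M}^{N} M_φ(N, K) · M_β(K, M) = M_{φ+β}(N, M). -/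
/-- The generalized binomial coefficient `C(φ,k) = binom(φ+k−1, k)
= φ(φ+1)⋯(φ+k−1)/k!` for `k ≥ 0`, and `0` for `k < 0`. -/
noncomputable def genC {K : Type*} [CommRing K] [Algebra ℚ K] (φ : K) (k : ℤ) : K :=
  if 0 ≤ k then
    (∏ i ∈ Finset.range k.toNat, (φ + (i : K))) *
      algebraMap ℚ K (1 / (k.toNat.factorial : ℚ))
  else 0

/-- The matrix realizing the `φ`-th power of `₍₀,q₎P`:
`M_φ(qn+i, qm+j) = C(φ, n−m)·C(φ, i−j)` for `0 ≤ i, j < q`. -/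
noncomputable def Mpow {K : Type*} [CommRing K] [Algebra ℚ K] (q : ℕ) (φ : K)
    (N M : ℕ) : K :=
  genC φ ((N / q : ℕ) - (M / q : ℕ) : ℤ) * genC φ ((N % q : ℕ) - (M % q : ℕ) : ℤ)

/-!
For natural `n`, `C(φ, n)` is the multiset coefficient `Ring.multichoose φ n`, and Chu–Vandermonde
says that the lower triangular Toeplitz matrices `T_φ = (C(φ, n - m))` satisfy
`T_φ T_β = T_{φ+β}`. Through `N ↦ (N / q, N % q)`, `M_φ` is the Kronecker product of two such
matrices: the nonzero terms of `∑ M_φ(N, k) M_β(k, M)` have `(k / q, k % q)` in the rectangle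
`[M / q, N / q] × [M % q, N % q]`, over which the sum factors.
-/

open Finset

theorem ascPochhammer_smeval_eq_prod_range {R : Type*} [CommSemiring R] (r : R) (n : ℕ) :
    (ascPochhammer ℕ n).smeval r = ∏ i ∈ range n, (r + i) := by
  rw [Polynomial.ascPochhammer_smeval_eq_eval]
  induction n with
  | zero => simp
  | succ n ih => rw [ascPochhammer_succ_eval, ih, prod_range_succ]

theorem multichoose_add_of_commute {R : Type*} [Ring R] [BinomialRing R] {r s : R}
    (h : Commute r s) (n : ℕ) :
    Ring.multichoose (r + s) n =
      ∑ p ∈ antidiagonal n, Ring.multichoose r p.1 * Ring.multichoose s p.2 := by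
  have multichoose_eq_choose_neg (t : R) (k : ℕ) :
      Ring.multichoose t k = Int.negOnePow k • Ring.choose (-t) k := by
    rw [Ring.choose_neg', smul_smul, Int.units_mul_self, one_smul]
  simp only [multichoose_eq_choose_neg, neg_add, Ring.add_choose_eq n h.neg_left.neg_right,
    smul_sum]
  refine sum_congr rfl fun p hp ↦ ?_
  rw [smul_mul_smul_comm, ← Int.negOnePow_add, ← Nat.cast_add,
    HasAntidiagonal.mem_antidiagonal.mp hp]

theorem le_of_div_le_div_of_mod_le_mod {q M N : ℕ} (hdiv : M / q ≤ N / q)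
    (hmod : M % q ≤ N % q) : M ≤ N :=
  calc M = q * (M / q) + M % q := (Nat.div_add_mod M q).symm
    _ ≤ q * (N / q) + N % q := by gcongr
    _ = N := Nat.div_add_mod N q

theorem div_le_div_and_mod_le_mod_iff {q M N : ℕ} :
    M / q ≤ N / q ∧ M % q ≤ N % q ↔ M ≤ N ∧ M % q ≤ N % q :=
  and_congr_left fun hmod ↦
    ⟨fun hdiv ↦ le_of_div_le_div_of_mod_le_mod hdiv hmod, fun hle ↦ Nat.div_le_div_right hle⟩

theorem sum_Icc_div_mod {A : Type*} [AddCommMonoid A] {q M N : ℕ} (hq : 0 < q) (f : ℕ × ℕ → A)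
    (hf : ∀ p ∉ Icc (M / q) (N / q) ×ˢ Icc (M % q) (N % q), f p = 0) :
    ∑ k ∈ Icc M N, f (k / q, k % q) =
      ∑ p ∈ Icc (M / q) (N / q) ×ˢ Icc (M % q) (N % q), f p := by
  have div_mod {p : ℕ × ℕ} (hp : p ∈ Icc (M / q) (N / q) ×ˢ Icc (M % q) (N % q)) :
      ((q * p.1 + p.2) / q, (q * p.1 + p.2) % q) = p := by
    have hlt : p.2 < q :=
      (mem_Icc.mp (mem_product.mp hp).2).2.trans_lt (Nat.mod_lt N hq)
    rw [Nat.mul_add_div hq, Nat.div_eq_of_lt hlt, Nat.mul_add_mod, Nat.mod_eq_of_lt hlt, add_zero]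
  refine (sum_of_injOn (fun p ↦ q * p.1 + p.2) ?injOn ?mapsTo ?eq_zero ?congr).symm
  case injOn =>
    intro p hp p' hp' heq
    rw [← div_mod hp, ← div_mod hp']
    exact congrArg (fun k ↦ (k / q, k % q)) heq
  case mapsTo =>
    intro p hp
    obtain ⟨hdiv, hmod⟩ := mem_product.mp ((div_mod hp).symm ▸ hp)
    rw [mem_Icc] at hdiv hmod
    exact mem_Icc.mpr ⟨le_of_div_le_div_of_mod_le_mod hdiv.1 hmod.1,
      le_of_div_le_div_of_mod_le_mod hdiv.2 hmod.2⟩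
  case eq_zero =>
    intro k _ hk
    exact hf _ fun hmem ↦ hk ⟨_, hmem, Nat.div_add_mod k q⟩
  case congr => exact fun p hp ↦ congrArg f (div_mod hp).symm

section RatAlgebra

variable {K : Type*} [CommRing K] [Algebra ℚ K]

theorem genC_of_neg (φ : K) {k : ℤ} (hk : k < 0) : genC φ k = 0 :=
  if_neg hk.not_ge

theorem genC_mul_genC_eq_zero (φ β : K) {n m k : ℕ} (hk : k ∉ Icc m n) :
    genC φ (n - k) * genC β (k - m) = 0 := by
  obtain hlt | hgt : k < m ∨ n < k := by
    rwa [mem_Icc, not_and_or, not_le, not_le] at hk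
  · rw [genC_of_neg β (by omega), mul_zero]
  · rw [genC_of_neg φ (by omega), zero_mul]

theorem factorial_nsmul_genC (φ : K) (n : ℕ) :
    n.factorial • genC φ n = ∏ i ∈ range n, (φ + i) := by
  have factorial_mul_inv :
      (n.factorial : K) * algebraMap ℚ K (1 / (n.factorial : ℚ)) = 1 := by
    rw [← map_natCast (algebraMap ℚ K), ← map_mul,
      mul_one_div_cancel (Nat.cast_ne_zero.mpr n.factorial_ne_zero), map_one]
  rw [genC, if_pos (Int.natCast_nonneg n), Int.toNat_natCast, nsmul_eq_mul, mul_left_comm,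
    factorial_mul_inv, mul_one]

/-- A `ℚ`-algebra is a binomial ring, with `genC` as its multiset coefficients. Choosing `genC` as
the data makes `genC φ n` and `Ring.multichoose φ n` definitionally equal for natural `n`. -/
noncomputable abbrev binomialRingOfRatAlgebra : BinomialRing K where
  toIsAddTorsionFree := IsAddTorsionFree.of_module_rat K
  multichoose φ n := genC φ n
  factorial_nsmul_multichoose φ n := by
    rw [factorial_nsmul_genC, ascPochhammer_smeval_eq_prod_range]

attribute [local instance] binomialRingOfRatAlgebra

theorem genC_natCast (φ : K) (n : ℕ) : genC φ n = Ring.multichoose φ n := rfl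

theorem genC_one (k : ℤ) : genC (1 : K) k = if 0 ≤ k then 1 else 0 := by
  split_ifs with hk
  · lift k to ℕ using hk
    rw [genC_natCast, Ring.multichoose_one]
  · exact genC_of_neg 1 (not_le.mp hk)

theorem sum_Icc_genC_mul_genC (φ β : K) (n m : ℕ) :
    ∑ k ∈ Icc m n, genC φ (n - k) * genC β (k - m) = genC (φ + β) (n - m) := by
  obtain hlt | hle := lt_or_ge n m
  · rw [Icc_eq_empty hlt.not_ge, sum_empty, genC_of_neg _ (by omega)]
  · obtain ⟨d, rfl⟩ := Nat.exists_eq_add_of_le hle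
    calc ∑ k ∈ Icc m (m + d), genC φ ((m + d : ℕ) - k) * genC β (k - m)
        = ∑ p ∈ antidiagonal d, genC φ p.1 * genC β p.2 := by
          refine sum_nbij' (fun k ↦ (m + d - k, k - m)) (fun p ↦ m + p.2) ?_ ?_ ?_ ?_ ?_
          all_goals grind [HasAntidiagonal.mem_antidiagonal]
      _ = genC (φ + β) ((m + d : ℕ) - m) := by
          rw [Nat.cast_add, add_sub_cancel_left]
          exact (multichoose_add_of_commute (Commute.all φ β) d).symm

theorem Mpow_one (q N M : ℕ) :
    Mpow q (1 : K) N M = if M ≤ N ∧ M % q ≤ N % q then 1 else 0 := by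
  simp only [Mpow, genC_one, sub_nonneg, Nat.cast_le, ite_zero_mul_ite_zero, mul_one,
    div_le_div_and_mod_le_mod_iff]

theorem sum_Icc_Mpow_mul_Mpow {q : ℕ} (hq : 0 < q) (φ β : K) (N M : ℕ) :
    ∑ k ∈ Icc M N, Mpow q φ N k * Mpow q β k M = Mpow q (φ + β) N M := by
  let term (n m k : ℕ) : K := genC φ (n - k) * genC β (k - m)
  calc ∑ k ∈ Icc M N, Mpow q φ N k * Mpow q β k M
      = ∑ k ∈ Icc M N, term (N / q) (M / q) (k / q) * term (N % q) (M % q) (k % q) :=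
        sum_congr rfl fun _ _ ↦ mul_mul_mul_comm _ _ _ _
    _ = ∑ p ∈ Icc (M / q) (N / q) ×ˢ Icc (M % q) (N % q),
          term (N / q) (M / q) p.1 * term (N % q) (M % q) p.2 := by
        refine sum_Icc_div_mod hq
          (fun p ↦ term (N / q) (M / q) p.1 * term (N % q) (M % q) p.2) fun p hp ↦ ?_
        obtain hdiv | hmod := not_and_or.mp (mt mem_product.mpr hp)
        · exact mul_eq_zero_of_left (genC_mul_genC_eq_zero φ β hdiv) _
        · exact mul_eq_zero_of_right _ (genC_mul_genC_eq_zero φ β hmod)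
    _ = Mpow q (φ + β) N M := by
        rw [sum_product, ← sum_mul_sum, sum_Icc_genC_mul_genC, sum_Icc_genC_mul_genC, Mpow]

end RatAlgebra

/-- (a) `M₁ = ₍₀,q₎P`, i.e. `M₁(N,M) = 1` if `M ≤ N` and `N mod q ≥ M mod q`, and
`0` otherwise; (b) the family `M_φ` satisfies `M_φ · M_β = M_{φ+β}`. -/
theorem Mpow_one_and_mul {K : Type*} [CommRing K] [Algebra ℚ K]
    (q : ℕ) (hq : 2 ≤ q) (φ β : K) :
    (∀ N M : ℕ, Mpow q (1 : K) N M =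
      if M ≤ N ∧ M % q ≤ N % q then 1 else 0) ∧
    (∀ N M : ℕ, M ≤ N →
      ∑ k ∈ Finset.Icc M N, Mpow q φ N k * Mpow q β k M = Mpow q (φ + β) N M) := by
  exact ⟨Mpow_one q, fun N M _ ↦ sum_Icc_Mpow_mul_Mpow (by omega) φ β N M⟩
end

section
/- Let q ≥ 2 be an integer. Define an integer matrix N whose row with index qn+m (n ≥ 0, 0 ≤ m < q) consists of the coefficients of the polynomial r_{qn+m}(x), where r_0(x) = 1; r_m(x) = x^{m−1}(x−1) for n = 0, 1 ≤ m < q; r_{qn}(x) = x^{q(n−1)}(x^q − 1) for n ≥ 1; and r_{qn+m}(x) = x^{q(n−1)+m−1}(x−1)(x^q − 1) for n ≥ 1, 1 ≤ m < q; that is, N_{qn+m, k} = [x^k] r_{qn+m}(x). Then N is the two-sided inverse of ₍₀,q₎P: Σ_k (₍₀,q₎P)_{a,k} · N_{k,b} = δ_{a,b} and Σ_k N_{a,k} · (₍₀,q₎P)_{k,b} = δ_{a,b} for all a, b ≥ 0. -/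
open Polynomial

/-- The polynomial forming row `qn+m` of the inverse of `₍₀,q₎P`:
`r₀ = 1`; `rₘ = x^{m−1}(x−1)` for `n = 0`, `1 ≤ m < q`;
`r_{qn} = x^{q(n−1)}(x^q−1)` for `n ≥ 1`;
`r_{qn+m} = x^{q(n−1)+m−1}(x−1)(x^q−1)` for `n ≥ 1`, `1 ≤ m < q`. -/
noncomputable def rowPoly (q idx : ℕ) : Polynomial ℤ :=
  if idx = 0 then 1
  else if idx / q = 0 then X ^ (idx % q - 1) * (X - 1)
  else if idx % q = 0 then X ^ (q * (idx / q - 1)) * (X ^ q - 1)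
  else X ^ (q * (idx / q - 1) + idx % q - 1) * (X - 1) * (X ^ q - 1)

/-- The entries of the matrix `₍₀,q₎P`. -/
def zeroPascal (q n m : ℕ) : ℤ :=
  if m ≤ n ∧ m % q ≤ n % q then 1 else 0

/-!
Sending `k` to `(k / q, k % q)` turns `₍₀,q₎P` into the zeta matrix of the product order on pairs,
and turns `r_k` into a product of a backward difference of powers of `X ^ q` and one of powers of
`X`. Hence `∑ k, P a k • r_k` is a product of two telescoping sums, equal to
`(X ^ q) ^ (a / q) * X ^ (a % q) = X ^ a`, which says `P * N = 1`. Both matrices are lower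
triangular, so `N * P = 1` follows from the same fact for their finite truncations.
-/

section Triangular

variable {R : Type*}

theorem submatrix_val_mul_apply_of_isLowerTriangular [NonUnitalNonAssocSemiring R]
    {A : Matrix ℕ ℕ R} (hA : A.IsLowerTriangular) (B : Matrix ℕ ℕ R) {N : ℕ} (i j : Fin N) :
    (A.submatrix Fin.val Fin.val * B.submatrix Fin.val Fin.val : Matrix (Fin N) (Fin N) R) i j =
      ∑ k ∈ Finset.range (i + 1), A i k * B k j := by
  have vanish : ∀ k ≥ (i : ℕ) + 1, A i k * B k j = 0 := fun k hk => by
    rw [hA (show (i : ℕ) < k from hk), zero_mul]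
  calc
    _ = ∑ k ∈ Finset.range N, A i k * B k j := Fin.sum_univ_eq_sum_range (fun k => A i k * B k j) N
    _ = _ := Finset.eventually_constant_sum vanish i.isLt

theorem sum_range_mul_eq_ite_symm_of_isLowerTriangular [NonAssocSemiring R]
    [IsStablyFiniteRing R] {A B : Matrix ℕ ℕ R} (hA : A.IsLowerTriangular)
    (hB : B.IsLowerTriangular)
    (hAB : ∀ a b, ∑ k ∈ Finset.range (a + 1), A a k * B k b = if a = b then 1 else 0) (a b : ℕ) :
    ∑ k ∈ Finset.range (a + 1), B a k * A k b = if a = b then 1 else 0 := by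
  let truncate (M : Matrix ℕ ℕ R) : Matrix (Fin (max a b + 1)) (Fin (max a b + 1)) R :=
    M.submatrix Fin.val Fin.val
  have truncate_mul : truncate A * truncate B = 1 := by
    ext i j
    rw [submatrix_val_mul_apply_of_isLowerTriangular hA, hAB, Matrix.one_apply]
    simp only [Fin.ext_iff]
  have truncate_mul_symm : truncate B * truncate A = 1 := mul_eq_one_symm truncate_mul
  have entry := congrFun₂ truncate_mul_symm
    ⟨a, Nat.lt_succ_of_le (le_max_left a b)⟩ ⟨b, Nat.lt_succ_of_le (le_max_right a b)⟩
  rw [submatrix_val_mul_apply_of_isLowerTriangular hB, Matrix.one_apply] at entry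
  simpa only [Fin.mk.injEq] using entry

end Triangular

section PowDiff

variable {R : Type*} [Ring R]

/-- The backward difference `x ^ n - x ^ (n - 1)` of the sequence of powers of `x`, in factored
form, where the term preceding `x ^ 0` is taken to be `0`. Both factors of a row polynomial have
this shape. -/
def powDiff (x : R) : ℕ → R
  | 0 => 1
  | n + 1 => x ^ n * (x - 1)

theorem powDiff_zero (x : R) : powDiff x 0 = 1 := rfl

theorem powDiff_of_ne_zero (x : R) {n : ℕ} (hn : n ≠ 0) :
    powDiff x n = x ^ (n - 1) * (x - 1) := by
  obtain ⟨n, rfl⟩ := Nat.exists_eq_succ_of_ne_zero hn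
  rfl

theorem sum_range_succ_powDiff (x : R) (n : ℕ) :
    ∑ i ∈ Finset.range (n + 1), powDiff x i = x ^ n := by
  induction n with
  | zero => simp [powDiff_zero]
  | succ n ih =>
    rw [Finset.sum_range_succ, ih, powDiff, mul_sub_one, ← pow_succ, add_sub_cancel]

theorem natDegree_powDiff_le {p : R[X]} {d : ℕ} (hp : p.natDegree ≤ d) (n : ℕ) :
    (powDiff p n).natDegree ≤ n * d := by
  cases n with
  | zero => simp [powDiff_zero]
  | succ n =>
    have sub_one_le : (p - 1).natDegree ≤ d := by
      simpa using natDegree_sub_le_of_le hp natDegree_one.le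
    rw [Nat.succ_mul]
    exact natDegree_mul_le_of_le (natDegree_pow_le_of_le n hp) sub_one_le

end PowDiff

theorem le_and_mod_le_iff_div_le_and_mod_le (q m n : ℕ) :
    m ≤ n ∧ m % q ≤ n % q ↔ m / q ≤ n / q ∧ m % q ≤ n % q := by
  refine and_congr_left fun mod_le => ⟨(Nat.div_le_div_right ·), fun div_le => ?_⟩
  rw [← Nat.div_add_mod m q, ← Nat.div_add_mod n q]
  gcongr

theorem isLowerTriangular_zeroPascal (q : ℕ) : (Matrix.of (zeroPascal q)).IsLowerTriangular :=
  fun _ _ hlt => if_neg fun h => h.1.not_gt hlt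

theorem sum_range_zeroPascal_smul_div_mod {M : Type*} [AddCommGroup M] {q : ℕ} (hq : 0 < q)
    (f : ℕ → ℕ → M) (a : ℕ) :
    ∑ k ∈ Finset.range (a + 1), zeroPascal q a k • f (k / q) (k % q) =
      ∑ i ∈ Finset.range (a / q + 1), ∑ j ∈ Finset.range (a % q + 1), f i j := by
  have mem_support_iff (k : ℕ) :
      k ∈ (Finset.range (a + 1)).filter (fun k => k ≤ a ∧ k % q ≤ a % q) ↔
        k / q ≤ a / q ∧ k % q ≤ a % q := by
    rw [Finset.mem_filter, Finset.mem_range_succ_iff, and_iff_right_of_imp And.left,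
      le_and_mod_le_iff_div_le_and_mod_le]
  have div_mod_mul_add {i j : ℕ} (hj : j ≤ a % q) : (q * i + j) / q = i ∧ (q * i + j) % q = j :=
    (Nat.div_mod_unique hq).2 ⟨add_comm _ _, hj.trans_lt (Nat.mod_lt a hq)⟩
  simp only [zeroPascal, ite_smul, one_smul, zero_smul]
  rw [← Finset.sum_filter, ← Finset.sum_product']
  refine Finset.sum_nbij' (fun k => (k / q, k % q)) (fun ij => q * ij.1 + ij.2) ?_ ?_
    (fun k _ => Nat.div_add_mod k q) ?_ (fun _ _ => rfl)
  · intro k hk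
    simpa only [Finset.mem_product, Finset.mem_range_succ_iff, mem_support_iff] using hk
  all_goals
    rintro ⟨i, j⟩ hij
    obtain ⟨hi, hj⟩ : i ≤ a / q ∧ j ≤ a % q := by
      simpa only [Finset.mem_product, Finset.mem_range_succ_iff] using hij
    obtain ⟨hdiv, hmod⟩ := div_mod_mul_add (i := i) hj
  · rw [mem_support_iff, hdiv, hmod]
    exact ⟨hi, hj⟩
  · exact Prod.ext hdiv hmod

theorem rowPoly_eq_powDiff_mul_powDiff (q k : ℕ) :
    rowPoly q k = powDiff (X ^ q) (k / q) * powDiff X (k % q) := by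
  rcases eq_or_ne k 0 with rfl | hk
  · simp [rowPoly, powDiff_zero]
  rcases eq_or_ne (k / q) 0 with hdiv | hdiv
  · have hmod : k % q ≠ 0 := fun h => hk (by rw [← Nat.div_add_mod k q, hdiv, h, mul_zero])
    simp [rowPoly, hk, hdiv, powDiff_zero, powDiff_of_ne_zero _ hmod]
  rcases eq_or_ne (k % q) 0 with hmod | hmod
  · simp [rowPoly, hk, hdiv, hmod, powDiff_zero, powDiff_of_ne_zero _ hdiv, pow_mul]
  · rw [rowPoly, if_neg hk, if_neg hdiv, if_neg hmod, powDiff_of_ne_zero _ hdiv,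
      powDiff_of_ne_zero _ hmod, Nat.add_sub_assoc (Nat.one_le_iff_ne_zero.2 hmod)]
    ring

theorem natDegree_rowPoly_le (q k : ℕ) : (rowPoly q k).natDegree ≤ k := by
  rw [rowPoly_eq_powDiff_mul_powDiff]
  calc
    _ ≤ k / q * q + k % q * 1 := natDegree_mul_le_of_le
      (natDegree_powDiff_le (natDegree_X_pow_le q) _) (natDegree_powDiff_le natDegree_X_le _)
    _ = k := by rw [mul_one, Nat.div_add_mod']

theorem isLowerTriangular_coeff_rowPoly (q : ℕ) :
    (Matrix.of fun k => (rowPoly q k).coeff).IsLowerTriangular :=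
  fun k _ hlt => coeff_eq_zero_of_natDegree_lt ((natDegree_rowPoly_le q k).trans_lt hlt)

theorem sum_range_zeroPascal_smul_rowPoly {q : ℕ} (hq : 0 < q) (a : ℕ) :
    ∑ k ∈ Finset.range (a + 1), zeroPascal q a k • rowPoly q k = X ^ a := by
  calc
    _ = ∑ i ∈ Finset.range (a / q + 1), ∑ j ∈ Finset.range (a % q + 1),
          powDiff (X ^ q) i * powDiff X j := by
      simp only [rowPoly_eq_powDiff_mul_powDiff]
      exact sum_range_zeroPascal_smul_div_mod hq (fun i j => powDiff (X ^ q) i * powDiff X j) a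
    _ = (X ^ q) ^ (a / q) * X ^ (a % q) := by
      rw [← Finset.sum_mul_sum, sum_range_succ_powDiff, sum_range_succ_powDiff]
    _ = X ^ a := by rw [← pow_mul, ← pow_add, Nat.div_add_mod]

theorem sum_range_zeroPascal_mul_coeff_rowPoly {q : ℕ} (hq : 0 < q) (a b : ℕ) :
    ∑ k ∈ Finset.range (a + 1), zeroPascal q a k * (rowPoly q k).coeff b =
      if a = b then 1 else 0 := by
  have h := congrArg (coeff · b) (sum_range_zeroPascal_smul_rowPoly hq a)
  simpa only [finsetSum_coeff, coeff_smul, smul_eq_mul, coeff_X_pow, eq_comm] using h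

/-- The matrix whose rows are the coefficients of the polynomials `r_{qn+m}` is the
two-sided inverse of `₍₀,q₎P`. -/
theorem rowPoly_inverse_zeroPascal (q : ℕ) (hq : 2 ≤ q) :
    (∀ a b : ℕ, ∑ k ∈ Finset.range (a + 1),
        zeroPascal q a k * (rowPoly q k).coeff b = if a = b then 1 else 0) ∧
    (∀ a b : ℕ, ∑ k ∈ Finset.range (a + 1),
        (rowPoly q a).coeff k * zeroPascal q k b = if a = b then 1 else 0) := by
  have hPN := sum_range_zeroPascal_mul_coeff_rowPoly (Nat.zero_lt_of_lt hq)
  exact ⟨hPN, sum_range_mul_eq_ite_symm_of_isLowerTriangular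
    (isLowerTriangular_zeroPascal q) (isLowerTriangular_coeff_rowPoly q) hPN⟩
end

section
/- Let q ≥ 2 be an integer and let a, b ∈ ℕ satisfy a mod q ≥ ⌈q/2⌉ and b mod q ≥ ⌈q/2⌉. Then (a+b) mod q < b mod q, and consequently (₍₀,q₎P)_{a+b, b} = 0; hence x^a ∘ x^b = 0 in the w-product algebra with weight w(n,m) = (₍₀,q₎P)_{n,m} (the monomials with exponent residues q−1, q−2, …, q−⌊q/2⌋ modulo q form a closed system of zero divisors). -/
open PowerSeries

/-!
The product `x^a ∘ x^b` is `x^(a+b)` scaled by the weight at `(a+b, a)`. When adding the residues of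
`a` and `b` modulo `q` produces a carry, the residue of `a + b` drops below the residue of each
summand, and there the matrix `₍₀,q₎P` vanishes. Two residues that are both at least `⌈q/2⌉` always
produce a carry.
-/

section WeightedProduct

variable {R : Type*} [CommRing R]

theorem wmul_monomial_monomial (w : ℕ → ℕ → R) (a b : ℕ) (r s : R) :
    wmul w (monomial a r) (monomial b s) = monomial (a + b) (w (a + b) a * r * s) := by
  ext n
  simp only [wmul, coeff_mk, coeff_monomial]
  rcases eq_or_ne n (a + b) with rfl | hn
  · rw [Finset.sum_eq_single_of_mem a (by simp) fun m _ hma => by simp [hma]]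
    simp
  · rw [if_neg hn]
    refine Finset.sum_eq_zero fun m hm => ?_
    have hmn : m ≤ n := Finset.mem_range_succ_iff.mp hm
    have not_both : m ≠ a ∨ n - m ≠ b := by omega
    rcases not_both with hma | hmb
    · simp [hma]
    · simp [hmb]

theorem wmul_X_pow_X_pow (w : ℕ → ℕ → R) (a b : ℕ) :
    wmul w (X ^ a) (X ^ b) = monomial (a + b) (w (a + b) a) := by
  simp only [X_pow_eq, wmul_monomial_monomial, mul_one]

end WeightedProduct

section Residues

variable {q a b : ℕ}

theorem add_mod_lt_right_of_le_mod_add_mod (hq : 0 < q) (carry : q ≤ a % q + b % q) :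
    (a + b) % q < b % q := by
  have mod_add : (a + b) % q + q = a % q + b % q := Nat.add_mod_add_of_le_add_mod carry
  have a_mod_lt : a % q < q := Nat.mod_lt a hq
  omega

/-- The matrix `₍₀,q₎P` over `R`, curried as row `n`, column `m` so that `residueMatrix R q` is a weight
for `wmul`. -/
def residueMatrix (R : Type*) [Zero R] [One R] (q n m : ℕ) : R :=
  if m ≤ n ∧ m % q ≤ n % q then 1 else 0

theorem residueMatrix_eq_zero_of_mod_lt (R : Type*) [Zero R] [One R] {n m : ℕ}
    (h : n % q < m % q) : residueMatrix R q n m = 0 :=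
  if_neg fun hmn => h.not_ge hmn.2

end Residues

theorem monomials_zero_divisors_general {R : Type*} [CommRing R] {q a b : ℕ} (hq : 0 < q)
    (carry : q ≤ a % q + b % q) :
    (a + b) % q < b % q ∧ residueMatrix R q (a + b) b = 0 ∧
      wmul (residueMatrix R q) (X ^ a) (X ^ b) = 0 := by
  have lt_right : (a + b) % q < b % q := add_mod_lt_right_of_le_mod_add_mod hq carry
  have lt_left : (a + b) % q < a % q := by
    rw [add_comm] at carry ⊢
    exact add_mod_lt_right_of_le_mod_add_mod hq carry
  refine ⟨lt_right, residueMatrix_eq_zero_of_mod_lt R lt_right, ?_⟩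
  rw [wmul_X_pow_X_pow, residueMatrix_eq_zero_of_mod_lt R lt_left, map_zero]

/-- If `a mod q ≥ ⌈q/2⌉` and `b mod q ≥ ⌈q/2⌉` then `(a+b) mod q < b mod q`, hence
`(₍₀,q₎P)_{a+b,b} = 0` and `x^a ∘ x^b = 0` in the algebra with weight
`w(n,m) = (₍₀,q₎P)_{n,m}`: the monomials with residues `≥ ⌈q/2⌉` form a closed
system of zero divisors. -/
theorem monomials_zero_divisors {R : Type*} [CommRing R] (q : ℕ) (hq : 2 ≤ q)
    (a b : ℕ) (ha : (q + 1) / 2 ≤ a % q) (hb : (q + 1) / 2 ≤ b % q) :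
    (a + b) % q < b % q ∧
    (if b ≤ a + b ∧ b % q ≤ (a + b) % q then (1 : R) else 0) = 0 ∧
    wmul (fun n m => if m ≤ n ∧ m % q ≤ n % q then (1 : R) else 0)
      (X ^ a) (X ^ b) = 0 :=
  monomials_zero_divisors_general (by omega) (by omega)
end

section
/- Let q ≥ 2 and k ≥ 1 be integers. Then for all n, m ≥ 0 and all 0 ≤ i, j < q^k: B_q(q^k·n + i, q^k·m + j) = B_q(n, m) · B_q(i, j). -/
open Classical in
/-- The entries of the fractal zero generalized Pascal matrix `₍[0,q]₎P`
(the generalized Sierpinski matrix): `B_q(n,m) = 1` if `m ≤ n` and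
`n mod qᵏ ≥ m mod qᵏ` for every `k ≥ 1`, and `0` otherwise. -/
noncomputable def Bq (q n m : ℕ) : ℤ :=
  if m ≤ n ∧ ∀ k : ℕ, 1 ≤ k → m % q ^ k ≤ n % q ^ k then 1 else 0

/-!
For `q ≥ 2`, the condition defining `Bq q n m = 1` says that every base-`q` digit of `m` is at most
the corresponding digit of `n`: the digit in position `l` is the leading digit of the residue modulo
`q ^ (l + 1)`, hence monotone in that residue. For `i < q ^ k`, the digits of `q ^ k * n + i` are
those of `i` in the positions below `k`, followed by those of `n`, so the digitwise comparison
splits into two independent ones.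
-/

/-- Digitwise comparison of natural numbers in base `q`. The digit in position `l` is written
`a / q ^ l % q`, so that all positions beyond the length of an expansion carry the digit `0`. -/
def DigitwiseLE (q a b : ℕ) : Prop :=
  ∀ l : ℕ, a / q ^ l % q ≤ b / q ^ l % q

section Digits

variable {q k i j : ℕ}

theorem mul_add_div_pow_mod_of_lt {l : ℕ} (hl : l < k) (n i : ℕ) :
    (q ^ k * n + i) / q ^ l % q = i / q ^ l % q := by
  have residue_eq : (q ^ k * n + i) % q ^ (l + 1) = i % q ^ (l + 1) := by
    obtain ⟨c, hc⟩ := pow_dvd_pow q (Nat.succ_le_of_lt hl)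
    rw [hc, mul_assoc, Nat.mul_add_mod]
  simp only [← Nat.mod_mul_right_div_self, ← pow_succ, residue_eq]

theorem mul_add_div_pow_add (hi : i < q ^ k) (n t : ℕ) :
    (q ^ k * n + i) / q ^ (k + t) = n / q ^ t := by
  rw [pow_add, ← Nat.div_div_eq_div_mul, Nat.mul_add_div (Nat.zero_lt_of_lt hi),
    Nat.div_eq_of_lt hi, add_zero]

theorem digitwiseLE_iff_forall_mod_pow_le {a b : ℕ} :
    DigitwiseLE q a b ↔ ∀ l : ℕ, a % q ^ l ≤ b % q ^ l := by
  constructor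
  · intro h l
    induction l with
    | zero => simp only [pow_zero, Nat.mod_one, le_refl]
    | succ l ih =>
      rw [Nat.mod_pow_succ, Nat.mod_pow_succ]
      exact Nat.add_le_add ih (Nat.mul_le_mul_left _ (h l))
  · intro h l
    simpa only [pow_succ, Nat.mod_mul_right_div_self] using
      Nat.div_le_div_right (c := q ^ l) (h (l + 1))

theorem DigitwiseLE.le {a b : ℕ} (hq : 1 < q) (h : DigitwiseLE q a b) : a ≤ b :=
  calc
    a = a % q ^ a := (Nat.mod_eq_of_lt (Nat.lt_pow_self hq)).symm
    _ ≤ b % q ^ a := digitwiseLE_iff_forall_mod_pow_le.mp h a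
    _ ≤ b := Nat.mod_le _ _

theorem digitwiseLE_mul_add_iff (hi : i < q ^ k) (hj : j < q ^ k) (n m : ℕ) :
    DigitwiseLE q (q ^ k * m + j) (q ^ k * n + i) ↔ DigitwiseLE q m n ∧ DigitwiseLE q j i := by
  constructor
  · intro h
    refine ⟨fun t => ?_, fun l => ?_⟩
    · simpa only [mul_add_div_pow_add hi, mul_add_div_pow_add hj] using h (k + t)
    · rcases lt_or_ge l k with hl | hl
      · simpa only [mul_add_div_pow_mod_of_lt hl] using h l
      · obtain ⟨t, rfl⟩ := Nat.exists_eq_add_of_le hl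
        have div_eq_zero : j / q ^ (k + t) = 0 := by
          rw [pow_add, ← Nat.div_div_eq_div_mul, Nat.div_eq_of_lt hj, Nat.zero_div]
        rw [div_eq_zero, Nat.zero_mod]
        exact Nat.zero_le _
  · rintro ⟨hmn, hji⟩ l
    rcases lt_or_ge l k with hl | hl
    · simpa only [mul_add_div_pow_mod_of_lt hl] using hji l
    · obtain ⟨t, rfl⟩ := Nat.exists_eq_add_of_le hl
      simpa only [mul_add_div_pow_add hi, mul_add_div_pow_add hj] using hmn t

end Digits

open Classical in
theorem Bq_eq_ite_digitwiseLE {q : ℕ} (hq : 1 < q) (n m : ℕ) :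
    Bq q n m = if DigitwiseLE q m n then 1 else 0 := by
  refine if_congr ⟨fun ⟨_, h⟩ => ?_, fun h => ⟨h.le hq, fun l _ => ?_⟩⟩ rfl rfl
  · refine digitwiseLE_iff_forall_mod_pow_le.mpr fun l => ?_
    rcases l.eq_zero_or_pos with rfl | hl
    · simp only [pow_zero, Nat.mod_one, le_refl]
    · exact h l hl
  · exact digitwiseLE_iff_forall_mod_pow_le.mp h l

/-- Self-similarity of the fractal zero generalized Pascal matrix:
`B_q(qᵏn+i, qᵏm+j) = B_q(n,m)·B_q(i,j)` for `0 ≤ i, j < qᵏ`. -/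
theorem Bq_self_similar (q : ℕ) (hq : 2 ≤ q) (k : ℕ) (hk : 1 ≤ k)
    (n m i j : ℕ) (hi : i < q ^ k) (hj : j < q ^ k) :
    Bq q (q ^ k * n + i) (q ^ k * m + j) = Bq q n m * Bq q i j := by
  classical
  simp only [Bq_eq_ite_digitwiseLE hq, digitwiseLE_mul_add_iff hi hj,
    ite_zero_mul_ite_zero, mul_one]
end

section
/- Let q ≥ 2 be an integer and n, m ≥ 0, with base-q digit expansions n = Σ_i n_i q^i and m = Σ_i m_i q^i (0 ≤ n_i, m_i < q). Then B_q(n, m) = ∏_i B_q(n_i, m_i); equivalently, B_q(n, m) = 1 if and only if n_i ≥ m_i for every digit position i. -/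
/-!
Since `n % q ^ (k + 1) = n % q ^ k + q ^ k * n_k`, comparing all digits of `m` and `n` compares all
residues modulo powers of `q`; conversely, dividing the residues modulo `q ^ (k + 1)` by `q ^ k`
recovers the digits `m_k` and `n_k`. Hence `B_q(n, m)` is the indicator of digitwise domination,
which is the product of the indicators of the single digits; for numbers with one digit that
indicator is again `B_q`.
-/

section Digits

variable {q n m N : ℕ}

theorem le_of_mod_le_mod_of_lt {d : ℕ} (hm : m < d) (h : m % d ≤ n % d) : m ≤ n :=
  calc
    m = m % d := (Nat.mod_eq_of_lt hm).symm
    _ ≤ n % d := h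
    _ ≤ n := Nat.mod_le n d

theorem digit_le_digit_of_mod_pow_succ_le {i : ℕ} (h : m % q ^ (i + 1) ≤ n % q ^ (i + 1)) :
    m / q ^ i % q ≤ n / q ^ i % q := by
  simpa only [pow_succ, Nat.mod_mul_right_div_self] using
    Nat.div_le_div_right (c := q ^ i) h

theorem mod_pow_le_mod_pow_of_forall_digit_le {k : ℕ}
    (h : ∀ i < k, m / q ^ i % q ≤ n / q ^ i % q) : m % q ^ k ≤ n % q ^ k := by
  induction k with
  | zero => simp only [pow_zero, Nat.mod_one, le_refl]
  | succ k ih =>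
    rw [Nat.mod_pow_succ, Nat.mod_pow_succ]
    have lower_le := ih fun i hi => h i (hi.trans k.lt_succ_self)
    have leading_le := h k k.lt_succ_self
    gcongr

theorem forall_digit_le_iff_forall_lt (hq : 0 < q) (hm : m < q ^ N) :
    (∀ i, m / q ^ i % q ≤ n / q ^ i % q) ↔ ∀ i < N, m / q ^ i % q ≤ n / q ^ i % q := by
  refine ⟨fun h i _ => h i, fun h i => ?_⟩
  rcases lt_or_ge i N with hi | hi
  · exact h i hi
  · have hmi : m < q ^ i := hm.trans_le (Nat.pow_le_pow_right hq hi)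
    simp [Nat.div_eq_of_lt hmi]

theorem le_and_forall_mod_pow_le_iff_forall_digit_le (hq : 0 < q) (hm : m < q ^ N) :
    (m ≤ n ∧ ∀ k, 1 ≤ k → m % q ^ k ≤ n % q ^ k) ↔
      ∀ i < N, m / q ^ i % q ≤ n / q ^ i % q := by
  refine ⟨fun h i _ => ?_, fun h => ⟨?_, fun k _ => ?_⟩⟩
  · exact digit_le_digit_of_mod_pow_succ_le (h.2 (i + 1) i.succ_pos)
  · exact le_of_mod_le_mod_of_lt hm (mod_pow_le_mod_pow_of_forall_digit_le h)
  · exact mod_pow_le_mod_pow_of_forall_digit_le fun i _ =>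
      (forall_digit_le_iff_forall_lt hq hm).mpr h i

end Digits

section Bq

variable {q m N : ℕ}

theorem Bq_eq_ite_forall_digit_le (hq : 0 < q) (n : ℕ) (hm : m < q ^ N) :
    Bq q n m = if ∀ i < N, m / q ^ i % q ≤ n / q ^ i % q then 1 else 0 := by
  simp only [Bq, le_and_forall_mod_pow_le_iff_forall_digit_le hq hm]

theorem Bq_eq_one_iff_forall_digit_le (hq : 0 < q) (n : ℕ) (hm : m < q ^ N) :
    Bq q n m = 1 ↔ ∀ i, m / q ^ i % q ≤ n / q ^ i % q := by
  rw [Bq_eq_ite_forall_digit_le hq n hm, forall_digit_le_iff_forall_lt hq hm]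
  simp

theorem Bq_mod_mod (hq : 0 < q) (n m : ℕ) :
    Bq q (n % q) (m % q) = if m % q ≤ n % q then 1 else 0 := by
  have one_digit : m % q < q ^ 1 := by simpa only [pow_one] using Nat.mod_lt m hq
  simp [Bq_eq_ite_forall_digit_le hq (n % q) one_digit]

theorem Bq_eq_prod_digits (hq : 0 < q) (n : ℕ) (hm : m < q ^ N) :
    Bq q n m = ∏ i ∈ Finset.range N, Bq q (n / q ^ i % q) (m / q ^ i % q) := by
  simp only [Bq_eq_ite_forall_digit_le hq n hm, Bq_mod_mod hq, Finset.prod_boole,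
    Finset.mem_range]

end Bq

/-- In terms of the base-`q` digits `n_i = (n / qⁱ) mod q`, one has
`B_q(n,m) = ∏ᵢ B_q(nᵢ, mᵢ)` (a finite product; digits beyond `n + m` vanish);
equivalently `B_q(n,m) = 1` iff `nᵢ ≥ mᵢ` for every digit position `i`. -/
theorem Bq_digits (q : ℕ) (hq : 2 ≤ q) (n m : ℕ) :
    Bq q n m =
      ∏ i ∈ Finset.range (n + m + 1), Bq q (n / q ^ i % q) (m / q ^ i % q) ∧
    (Bq q n m = 1 ↔ ∀ i : ℕ, m / q ^ i % q ≤ n / q ^ i % q) := by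
  have q_pos : 0 < q := by lia
  have m_lt_pow : m < q ^ (n + m + 1) :=
    calc
      m < n + m + 1 := by lia
      _ < q ^ (n + m + 1) := Nat.lt_pow_self hq
  exact ⟨Bq_eq_prod_digits q_pos n m_lt_pow, Bq_eq_one_iff_forall_digit_le q_pos n m_lt_pow⟩
end

section
/- Let q ≥ 2 be an integer. Define polynomials w_0(x) = 1 and w_d(x) = x^{d−1}(x − 1) for 1 ≤ d < q, and define the integer matrix N by N(n, m) = [x^m] ∏_i w_{n_i}(x^{q^i}), where n = Σ_i n_i q^i is the base-q digit expansion of n (a finite product). Then N is the two-sided inverse of the matrix B_q: Σ_k B_q(n, k) · N(k, m) = δ_{n,m} and Σ_k N(n, k) · B_q(k, m) = δ_{n,m} for all n, m ≥ 0. -/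
open Polynomial

/-- `w₀(x) = 1` and `w_d(x) = x^{d−1}(x−1)` for `1 ≤ d < q`. -/
noncomputable def wPoly (d : ℕ) : Polynomial ℤ :=
  if d = 0 then 1 else X ^ (d - 1) * (X - 1)

/-- Row `n` of the inverse matrix: the coefficients of `∏ᵢ w_{nᵢ}(x^{qⁱ})`, where
`n = ∑ᵢ nᵢ qⁱ` is the base-`q` digit expansion (the range `i ≤ n` captures all
nonzero digits). -/
noncomputable def invRow (q n : ℕ) : Polynomial ℤ :=
  ∏ i ∈ Finset.range (n + 1), (wPoly (n / q ^ i % q)).comp (X ^ q ^ i)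

/-!
Reading off the last base-`q` digit shows that both matrices have a recursive block structure:
`B_q(r + qa, s + qb)` is `B_q(a, b)` if `s ≤ r` and `0` otherwise, and row `r + qa` of `N` has
generating polynomial `w_r(x)` times that of row `a` at `x^q`. Since `w_0 + ⋯ + w_r` telescopes to
`x^r`, induction on the number of digits gives `∑ₖ B_q(n, k) Nₖ(x) = x^n`, that is `B_q N = 1`.
As `B_q` is lower triangular, this right inverse is also a left inverse, by passing to the finite
leading blocks.
-/

open Finset OrderDual

section LowerTriangular

/-- The upper left `M × M` block of an infinite matrix, through which facts about finite square
matrices are transferred to infinite triangular ones. -/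
def leadingBlock {R : Type*} (M : ℕ) (A : Matrix ℕ ℕ R) : Matrix (Fin M) (Fin M) R :=
  A.submatrix Fin.val Fin.val

lemma leadingBlock_mul_apply {R : Type*} [NonUnitalNonAssocSemiring R] {M : ℕ}
    {A : Matrix ℕ ℕ R} (hA : (leadingBlock M A).BlockTriangular toDual) (D : Matrix ℕ ℕ R)
    (i j : Fin M) :
    (leadingBlock M A * leadingBlock M D) i j = ∑ k ∈ range (i + 1), A i k * D k j := by
  have sum_extend : ∑ k ∈ range (i + 1), A i k * D k j = ∑ k ∈ range M, A i k * D k j := by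
    refine sum_subset (range_mono i.isLt) fun k hkM hki => ?_
    have hik : (i : ℕ) < k := by simpa using hki
    have hAik : A i k = 0 := hA (i := i) (j := ⟨k, mem_range.1 hkM⟩) hik
    rw [hAik, zero_mul]
  rw [sum_extend, sum_range, Matrix.mul_apply]
  rfl

theorem sum_range_mul_eq_ite_symm_of_lowerTriangular {R : Type*} [CommRing R]
    {A D : Matrix ℕ ℕ R} (hA : A.BlockTriangular toDual)
    (hAD : ∀ n m, ∑ k ∈ range (n + 1), A n k * D k m = if n = m then 1 else 0) (n m : ℕ) :
    ∑ k ∈ range (n + 1), D n k * A k m = if n = m then 1 else 0 := by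
  let M := n + m + 1
  have hA_block : (leadingBlock M A).BlockTriangular toDual := fun _ _ hij => hA hij
  have hmul : leadingBlock M A * leadingBlock M D = 1 := by
    ext i j
    rw [leadingBlock_mul_apply hA_block, hAD, Matrix.one_apply]
    simp only [Fin.ext_iff]
  have hD_block : (leadingBlock M D).BlockTriangular toDual := by
    let _ := invertibleOfRightInverse _ _ hmul
    rw [← Matrix.inv_eq_right_inv hmul]
    exact Matrix.blockTriangular_inv_of_blockTriangular hA_block
  let i : Fin M := ⟨n, by omega⟩
  let j : Fin M := ⟨m, by omega⟩
  calc ∑ k ∈ range (n + 1), D n k * A k m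
      = (leadingBlock M D * leadingBlock M A) i j := (leadingBlock_mul_apply hD_block A i j).symm
    _ = if n = m then 1 else 0 := by
      rw [mul_eq_one_comm.1 hmul, Matrix.one_apply]
      simp only [i, j, Fin.ext_iff]

end LowerTriangular

section Digits

variable {q r s : ℕ}

lemma add_mul_mod_pow_succ (hr : r < q) (a k : ℕ) :
    (r + q * a) % q ^ (k + 1) = r + q * (a % q ^ k) := by
  rw [pow_succ', Nat.mod_mul, Nat.add_mul_mod_self_left, Nat.mod_eq_of_lt hr,
    Nat.add_mul_div_left _ _ (by omega), Nat.div_eq_of_lt hr, zero_add]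

lemma add_mul_le_add_mul_iff (hsr : s ≤ r) (hr : r < q) {a b : ℕ} :
    s + q * b ≤ r + q * a ↔ b ≤ a := by
  refine ⟨fun h => ?_, fun h => by gcongr⟩
  have hdiv := Nat.div_le_div_right (c := q) h
  rwa [Nat.add_mul_div_left _ _ (by omega), Nat.add_mul_div_left _ _ (by omega),
    Nat.div_eq_of_lt hr, Nat.div_eq_of_lt (hsr.trans_lt hr), zero_add, zero_add] at hdiv

lemma sum_range_mul_eq_sum_sum {α : Type*} [AddCommMonoid α] (q a : ℕ) (f : ℕ → α) :
    ∑ k ∈ range (q * a), f k = ∑ b ∈ range a, ∑ s ∈ range q, f (s + q * b) := by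
  induction a with
  | zero => simp
  | succ a ih =>
    rw [Nat.mul_succ, sum_range_add, ih, sum_range_succ]
    simp only [add_comm (q * a)]

end Digits

section Bq

variable {q r s : ℕ}

/-- Domination of `m` by `n` modulo all powers of `q`, the relation cutting out the support of `Bq`.
The exponent `k = 0` is admitted, as it imposes no condition and makes the recursion on digits
uniform. -/
def ModPowLE (q m n : ℕ) : Prop :=
  m ≤ n ∧ ∀ k, m % q ^ k ≤ n % q ^ k

open Classical in
lemma Bq_eq_ite (q n m : ℕ) : Bq q n m = if ModPowLE q m n then 1 else 0 := by
  have exponent_pos_iff : (∀ k, 1 ≤ k → m % q ^ k ≤ n % q ^ k) ↔ ∀ k, m % q ^ k ≤ n % q ^ k := by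
    refine ⟨fun h k => ?_, fun h k _ => h k⟩
    rcases k.eq_zero_or_pos with rfl | hk
    · simp [Nat.mod_one]
    · exact h k hk
  exact if_congr (and_congr_right' exponent_pos_iff) rfl rfl

lemma modPowLE_add_mul_iff (hr : r < q) (hs : s < q) (a b : ℕ) :
    ModPowLE q (s + q * b) (r + q * a) ↔ s ≤ r ∧ ModPowLE q b a := by
  have last_digit_le (h : ModPowLE q (s + q * b) (r + q * a)) : s ≤ r := by
    simpa [Nat.mod_eq_of_lt, hr, hs] using h.2 1
  have iff_of_le (hsr : s ≤ r) : ModPowLE q (s + q * b) (r + q * a) ↔ ModPowLE q b a := by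
    refine and_congr (add_mul_le_add_mul_iff hsr hr) ⟨fun h k => ?_, fun h k => ?_⟩
    · simpa only [add_mul_mod_pow_succ hr, add_mul_mod_pow_succ hs,
        add_mul_le_add_mul_iff hsr hr] using h (k + 1)
    · cases k with
      | zero => simp [Nat.mod_one]
      | succ k =>
        rw [add_mul_mod_pow_succ hr, add_mul_mod_pow_succ hs, add_mul_le_add_mul_iff hsr hr]
        exact h k
  exact ⟨fun h => ⟨last_digit_le h, (iff_of_le (last_digit_le h)).1 h⟩,
    fun ⟨hsr, h⟩ => (iff_of_le hsr).2 h⟩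

lemma Bq_add_mul (hr : r < q) (hs : s < q) (a b : ℕ) :
    Bq q (r + q * a) (s + q * b) = if s ≤ r then Bq q a b else 0 := by
  classical
  simp only [Bq_eq_ite, modPowLE_add_mul_iff hr hs, ite_and]

lemma Bq_eq_zero_of_lt {n m : ℕ} (h : n < m) : Bq q n m = 0 :=
  if_neg fun hmn => h.not_ge hmn.1

end Bq

section InvRow

variable {q r : ℕ}

lemma sum_range_succ_wPoly (r : ℕ) : ∑ s ∈ range (r + 1), wPoly s = X ^ r := by
  induction r with
  | zero => simp [wPoly]
  | succ r ih =>
    rw [sum_range_succ, ih, wPoly, if_neg r.succ_ne_zero, Nat.add_sub_cancel]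
    ring

lemma sum_range_ite_le_wPoly (hr : r < q) :
    ∑ s ∈ range q, (if s ≤ r then wPoly s else 0) = X ^ r := by
  have filter_le : {s ∈ range q | s ≤ r} = range (r + 1) := by
    ext s
    simp only [mem_filter, mem_range]
    omega
  rw [← sum_filter, filter_le, sum_range_succ_wPoly]

lemma invRow_zero (q : ℕ) : invRow q 0 = 1 := by
  simp [invRow, wPoly]

lemma invRow_eq_prod_expand (hq : 1 < q) {n M : ℕ} (hnM : n < M) :
    invRow q n = ∏ i ∈ range M, expand ℤ (q ^ i) (wPoly (n / q ^ i % q)) := by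
  simp only [invRow, ← expand_eq_comp_X_pow]
  refine (eventually_constant_prod (fun i hi => ?_) hnM).symm
  have hn : n < q ^ i := (Nat.lt_of_succ_le hi).trans (Nat.lt_pow_self hq)
  simp [Nat.div_eq_of_lt hn, wPoly]

lemma invRow_add_mul (hq : 1 < q) (hr : r < q) (a : ℕ) :
    invRow q (r + q * a) = wPoly r * expand ℤ q (invRow q a) := by
  have ha : a < r + q * a + 1 := by nlinarith
  rw [invRow_eq_prod_expand hq (M := r + q * a + 1 + 1) (by omega), prod_range_succ',
    invRow_eq_prod_expand hq ha, map_prod, mul_comm]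
  congr 1
  · simp [Nat.mod_eq_of_lt hr]
  · refine prod_congr rfl fun i _ => ?_
    rw [expand_expand, pow_succ', ← Nat.div_div_eq_div_mul, Nat.add_mul_div_left _ _ (by omega),
      Nat.div_eq_of_lt hr, zero_add]

end InvRow

section Inverse

variable {q r : ℕ}

lemma sum_Bq_mul_invRow_digit (hq : 1 < q) (hr : r < q) (a b : ℕ) :
    ∑ s ∈ range q, C (Bq q (r + q * a) (s + q * b)) * invRow q (s + q * b) =
      X ^ r * expand ℤ q (C (Bq q a b) * invRow q b) := by
  rw [← sum_range_ite_le_wPoly hr, sum_mul]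
  refine sum_congr rfl fun s hs => ?_
  rw [Bq_add_mul hr (mem_range.1 hs), invRow_add_mul hq (mem_range.1 hs), map_mul, expand_C]
  split_ifs
  · ring
  · simp

lemma sum_Bq_mul_invRow_add_mul (hq : 1 < q) (hr : r < q) (a : ℕ) :
    ∑ k ∈ range (r + q * a + 1), C (Bq q (r + q * a) k) * invRow q k =
      X ^ r * expand ℤ q (∑ b ∈ range (a + 1), C (Bq q a b) * invRow q b) := by
  have range_le : r + q * a + 1 ≤ q * (a + 1) := by
    rw [mul_add_one]
    omega
  have eq_zero_of_ge : ∀ k ≥ r + q * a + 1, C (Bq q (r + q * a) k) * invRow q k = 0 :=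
    fun k hk => by rw [Bq_eq_zero_of_lt hk, C_0, zero_mul]
  rw [← eventually_constant_sum eq_zero_of_ge range_le, sum_range_mul_eq_sum_sum, map_sum, mul_sum]
  exact sum_congr rfl fun b _ => sum_Bq_mul_invRow_digit hq hr a b

theorem sum_Bq_mul_invRow (hq : 1 < q) (n : ℕ) :
    ∑ k ∈ range (n + 1), C (Bq q n k) * invRow q k = X ^ n := by
  induction n using Nat.strong_induction_on with
  | _ n ih =>
    rcases n.eq_zero_or_pos with rfl | hn
    · simp [Bq, invRow_zero]
    have hr : n % q < q := Nat.mod_lt _ (by omega)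
    have step := sum_Bq_mul_invRow_add_mul hq hr (n / q)
    rwa [ih _ (Nat.div_lt_self hn hq), map_pow, expand_X, ← pow_mul, ← pow_add,
      Nat.mod_add_div] at step

theorem sum_Bq_mul_coeff_invRow (hq : 1 < q) (n m : ℕ) :
    ∑ k ∈ range (n + 1), Bq q n k * (invRow q k).coeff m = if n = m then 1 else 0 := by
  have hcoeff := congrArg (coeff · m) (sum_Bq_mul_invRow hq n)
  simpa only [finsetSum_coeff, coeff_C_mul, coeff_X_pow, eq_comm (a := m)] using hcoeff

end Inverse

/-- The matrix `N(n,m) = [xᵐ] ∏ᵢ w_{nᵢ}(x^{qⁱ})` is the two-sided inverse of the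
fractal zero generalized Pascal matrix `B_q`. -/
theorem invRow_inverse_Bq (q : ℕ) (hq : 2 ≤ q) :
    (∀ n m : ℕ, ∑ k ∈ Finset.range (n + 1),
        Bq q n k * (invRow q k).coeff m = if n = m then 1 else 0) ∧
    (∀ n m : ℕ, ∑ k ∈ Finset.range (n + 1),
        (invRow q n).coeff k * Bq q k m = if n = m then 1 else 0) := by
  have hBN := sum_Bq_mul_coeff_invRow hq
  have hB : Matrix.BlockTriangular (Bq q) toDual := fun _ _ hnm => Bq_eq_zero_of_lt hnm
  exact ⟨hBN, sum_range_mul_eq_ite_symm_of_lowerTriangular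
    (D := fun n m => (invRow q n).coeff m) hB hBN⟩
end
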